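/- Optimality of exponential cost in Runge approximation for harmonic functions: set h_l = g_l/‖g_l‖_{H¹(B_{1/2})} with g_l(rθ) = r^l ψ_{l1}(θ) as above. There exist constants c > 0 such that for all sufficiently large l: any harmonic function u on B_1 with u ∈ H¹(B_1) and ‖h_l − u‖_{L²(B_{1/2})} ≤ (10 l)^{-1} must satisfy ‖u‖_{H^{1/2}(∂B_1)} ≥ c e^{c l}. -/

import Mathlib

/-!
The proof isolates the degree `l` component `P_l` of `u` by pairing `u` with `g` on `B_{1/2}`.

Everything about solid harmonics comes from one identity (`gauss_green`): integrating by parts on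
all of `ℝⁿ` against the Gaussian weight `e^{-|x|²}`, harmonicity and Euler's identity give
`∫ e^{-|x|²} ∇f · ∇g = 2 (deg g) ∫ e^{-|x|²} f g`. The left side is symmetric in `f` and `g`, so
after passing to polar coordinates solid harmonics of different degrees are orthogonal on the
sphere (`sphere_orthogonal`), and `f = g` gives `∫_{∂B₁} |∇g|² = l (2l + n - 2) ∫_{∂B₁} g²`
(`sphere_gradient`). With `A = ‖g‖²_{L²(B_{1/2})} = 2^{-(n+2l)} / (n + 2l)`, integrating over radii
yields `‖g‖²_{H¹(B_{1/2})} = A (1 + 4 l (2l + n))` (`h1_norm`). Hence `‖h_l‖_{L²(B_{1/2})}`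
is at least `1 / (5 l)` when `l ≥ n`, twice the allowed error.

By orthogonality and `L²` convergence of the expansion, `∫_{B_{1/2}} u g = A s` with
`s = ∫_{∂B₁} P_l g` (`pairing`). Writing `h_l = t g`, Cauchy-Schwarz gives
`A |t - s| ≤ √A / (10 l)`, while `t ≥ 2 / (10 l √A)`, so `s² ≥ 1 / (100 l² A)` (`coeff_bound`).
The right side grows like `4^l / l` (`exp_bound`), and `s² ≤ ‖P_l‖²_{L²(∂B₁)}` is bounded by the
degree `l` term of the `H^{1/2}` sum.
-/

open MeasureTheory Metric

noncomputable section

variable {n : ℕ}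

/-- The Laplacian of `f : ℝⁿ → ℝ`. -/
def lap (f : EuclideanSpace ℝ (Fin n) → ℝ) (x : EuclideanSpace ℝ (Fin n)) : ℝ :=
  ∑ i : Fin n,
    fderiv ℝ (fun y => fderiv ℝ f y (EuclideanSpace.single i 1)) x (EuclideanSpace.single i 1)

/-- `P` is a solid harmonic of degree `l`: a smooth, positively homogeneous (of degree `l`)
harmonic function on `ℝⁿ`. -/
def IsSolidHarmonic (l : ℕ) (P : EuclideanSpace ℝ (Fin n) → ℝ) : Prop :=
  ContDiff ℝ (⊤ : ℕ∞) P ∧ (∀ c : ℝ, 0 ≤ c → ∀ x, P (c • x) = c ^ l * P x) ∧ ∀ x, lap P x = 0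

/-- The surface measure on the unit sphere of `ℝⁿ`. -/
def sphMeas (n : ℕ) : Measure (sphere (0 : EuclideanSpace ℝ (Fin n)) 1) :=
  (volume : Measure (EuclideanSpace ℝ (Fin n))).toSphere

/-! ### Gaussian integrability of functions of polynomial growth -/

/-- `F` grows at most polynomially. -/
def PolyGrowth (F : EuclideanSpace ℝ (Fin n) → ℝ) : Prop :=
  ∃ C : ℝ, ∃ k : ℕ, ∀ x, |F x| ≤ C * (1 + ‖x‖) ^ k

lemma PolyGrowth.mul {F G : EuclideanSpace ℝ (Fin n) → ℝ} (hF : PolyGrowth F)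
    (hG : PolyGrowth G) : PolyGrowth (fun x => F x * G x) := by
  obtain ⟨C, k, hC⟩ := hF
  obtain ⟨D, m, hD⟩ := hG
  refine ⟨C * D, k + m, fun x => ?_⟩
  rw [abs_mul, pow_add]
  calc |F x| * |G x| ≤ (C * (1 + ‖x‖) ^ k) * (D * (1 + ‖x‖) ^ m) :=
        mul_le_mul (hC x) (hD x) (abs_nonneg _) ((abs_nonneg _).trans (hC x))
    _ = _ := by ring

lemma polyGrowth_coord (i : Fin n) :
    PolyGrowth (fun x : EuclideanSpace ℝ (Fin n) => x i) := by
  refine ⟨1, 1, fun x => ?_⟩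
  have := PiLp.norm_apply_le x i
  rw [Real.norm_eq_abs] at this
  simp only [one_mul, pow_one]
  linarith

/-- Continuous positively homogeneous functions grow polynomially. Degree `k - j` is encoded
without subtraction as `c^j F(c x) = c^k F(x)`, which also covers the derivatives of functions
of degree `0` or `1`. -/
lemma polyGrowth_of_homog {F : EuclideanSpace ℝ (Fin n) → ℝ} (hF : Continuous F) (j k : ℕ)
    (h : ∀ c : ℝ, 0 < c → ∀ x, c ^ j * F (c • x) = c ^ k * F x) : PolyGrowth F := by
  obtain ⟨M, hM⟩ := (isCompact_closedBall (0 : EuclideanSpace ℝ (Fin n)) 1).exists_bound_of_continuousOn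
    hF.continuousOn
  have hM0 : 0 ≤ M := (norm_nonneg _).trans (hM 0 (by simp))
  refine ⟨M, k, fun x => ?_⟩
  rcases le_or_gt ‖x‖ 1 with hx | hx
  · refine (hM x (by simpa using hx)).trans (le_mul_of_one_le_right hM0 ?_)
    exact one_le_pow₀ (by linarith [norm_nonneg x])
  · have hc : 0 < ‖x‖ := by linarith
    have h1 := h ‖x‖ hc (‖x‖⁻¹ • x)
    rw [smul_smul, mul_inv_cancel₀ hc.ne', one_smul] at h1
    have h2 : |F (‖x‖⁻¹ • x)| ≤ M := hM _ (by simp [norm_smul, hc.ne'])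
    calc |F x| ≤ ‖x‖ ^ j * |F x| := le_mul_of_one_le_left (abs_nonneg _) (one_le_pow₀ hx.le)
      _ = ‖x‖ ^ k * |F (‖x‖⁻¹ • x)| := by
        rw [← abs_of_nonneg (pow_nonneg hc.le j), ← abs_mul, h1, abs_mul,
          abs_of_nonneg (pow_nonneg hc.le k)]
      _ ≤ (1 + ‖x‖) ^ k * M := by gcongr; linarith
      _ = _ := mul_comm _ _

/-- The Gaussian weight `e^{-|x|²}`. -/
def gw (x : EuclideanSpace ℝ (Fin n)) : ℝ := Real.exp (-‖x‖ ^ 2)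

lemma integrable_half_gauss :
    Integrable (fun x : EuclideanSpace ℝ (Fin n) => Real.exp (-(1 / 2) * ‖x‖ ^ 2)) := by
  have h := (GaussianFourier.integrable_cexp_neg_mul_sq_norm_add
    (V := EuclideanSpace ℝ (Fin n)) (b := (1 / 2 : ℂ)) (by norm_num) 0 0).norm
  refine h.congr (.of_forall fun x => ?_)
  simp only [Complex.norm_exp]
  congr 1
  rw [← Complex.ofReal_pow]
  simp [-Complex.ofReal_pow]

lemma contDiff_gw : ContDiff ℝ (⊤ : ℕ∞) (gw : EuclideanSpace ℝ (Fin n) → ℝ) :=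
  (contDiff_norm_sq ℝ).neg.exp

/-- The bound used is `(1 + r)^k ≤ k! e^{1 + r}` together with `1 + r - r² ≤ 2 - r²/2`. -/
lemma integrable_gw_mul {F : EuclideanSpace ℝ (Fin n) → ℝ} (hF : Continuous F)
    (h : PolyGrowth F) : Integrable (fun x => gw x * F x) := by
  obtain ⟨C, k, hC⟩ := h
  refine Integrable.mono' (integrable_half_gauss.const_mul (C * k.factorial * Real.exp 2))
    (contDiff_gw.continuous.mul hF).aestronglyMeasurable (.of_forall fun x => ?_)
  have hC0 : 0 ≤ C := by
    have := (abs_nonneg _).trans (hC 0)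
    simpa using this
  have h1 := Real.pow_div_factorial_le_exp (x := 1 + ‖x‖) (by positivity) k
  rw [div_le_iff₀ (by positivity)] at h1
  have h2 : Real.exp (-‖x‖ ^ 2) * Real.exp (1 + ‖x‖) ≤
      Real.exp 2 * Real.exp (-(1 / 2) * ‖x‖ ^ 2) := by
    rw [← Real.exp_add, ← Real.exp_add, Real.exp_le_exp]
    nlinarith [sq_nonneg (‖x‖ - 1)]
  rw [norm_mul, gw, Real.norm_eq_abs, Real.norm_eq_abs, abs_of_pos (Real.exp_pos _)]
  calc Real.exp (-‖x‖ ^ 2) * |F x|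
      ≤ Real.exp (-‖x‖ ^ 2) * (C * (Real.exp (1 + ‖x‖) * k.factorial)) := by
        gcongr
        exact (hC x).trans (by gcongr)
    _ = C * k.factorial * (Real.exp (-‖x‖ ^ 2) * Real.exp (1 + ‖x‖)) := by ring
    _ ≤ C * k.factorial * (Real.exp 2 * Real.exp (-(1 / 2) * ‖x‖ ^ 2)) := by gcongr
    _ = _ := by ring

/-! ### Derivatives of homogeneous functions and the weighted Green identity -/

/-- Directional derivatives lower the degree of homogeneity by one. -/
lemma fderiv_homog {F : EuclideanSpace ℝ (Fin n) → ℝ} {j k : ℕ}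
    (h : ∀ c : ℝ, 0 < c → ∀ x, c ^ j * F (c • x) = c ^ k * F x) (hF : Differentiable ℝ F)
    (v : EuclideanSpace ℝ (Fin n)) (c : ℝ) (hc : 0 < c) (x : EuclideanSpace ℝ (Fin n)) :
    c ^ (j + 1) * fderiv ℝ F (c • x) v = c ^ k * fderiv ℝ F x v := by
  have h1 : (fun y => c ^ j * F (c • y)) = fun y => c ^ k * F y := funext (h c hc)
  have hd : DifferentiableAt ℝ (fun y => F (c • y)) x :=
    (hF _).comp x (differentiableAt_id.const_smul c)
  have h2 : fderiv ℝ (fun y => c ^ j * F (c • y)) x = fderiv ℝ (fun y => c ^ k * F y) x := by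
    rw [h1]
  rw [fderiv_const_mul hd, fderiv_const_mul (hF x), fderiv_comp_smul] at h2
  have h3 := congrArg (fun L => L v) h2
  simp only [FunLike.coe_smul, Pi.smul_apply, smul_eq_mul] at h3
  rw [← h3]; ring

/-- Partial derivative in the `i`-th coordinate direction. -/
def pd (i : Fin n) (f : EuclideanSpace ℝ (Fin n) → ℝ) (x : EuclideanSpace ℝ (Fin n)) : ℝ :=
  fderiv ℝ f x (EuclideanSpace.single i 1)

lemma contDiff_pd {f : EuclideanSpace ℝ (Fin n) → ℝ} (hf : ContDiff ℝ (⊤ : ℕ∞) f) (i : Fin n) :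
    ContDiff ℝ (⊤ : ℕ∞) (pd i f) :=
  (hf.fderiv_right (m := (⊤ : ℕ∞)) (by simp)).clm_apply contDiff_const

lemma differentiable_of_smooth {f : EuclideanSpace ℝ (Fin n) → ℝ} (hf : ContDiff ℝ (⊤ : ℕ∞) f) :
    Differentiable ℝ f := hf.differentiable (by simp)

lemma fderiv_gw (i : Fin n) (x : EuclideanSpace ℝ (Fin n)) :
    fderiv ℝ gw x (EuclideanSpace.single i 1) = -2 * x i * gw x := by
  have h : HasFDerivAt (gw : EuclideanSpace ℝ (Fin n) → ℝ)
      (Real.exp (-‖x‖ ^ 2) • -((2 : ℕ) • innerSL ℝ x : EuclideanSpace ℝ (Fin n) →L[ℝ] ℝ)) x :=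
    (hasStrictFDerivAt_norm_sq x).hasFDerivAt.neg.exp
  rw [h.fderiv]
  simp [gw, EuclideanSpace.inner_single_right]
  ring

lemma fderiv_eq_sum (f : EuclideanSpace ℝ (Fin n) → ℝ) (x v : EuclideanSpace ℝ (Fin n)) :
    fderiv ℝ f x v = ∑ i, v i * pd i f x := by
  have hv : v = ∑ i, v i • EuclideanSpace.single i (1 : ℝ) := by
    ext j
    simp [Finset.sum_apply, Pi.single_apply]
  conv_lhs => rw [hv]
  simp [map_sum, pd]

lemma norm_gradient_sq (f : EuclideanSpace ℝ (Fin n) → ℝ) (x : EuclideanSpace ℝ (Fin n)) :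
    ‖gradient f x‖ ^ 2 = ∑ i, pd i f x * pd i f x := by
  rw [EuclideanSpace.real_norm_sq_eq]
  refine Finset.sum_congr rfl fun i _ => ?_
  have : pd i f x = gradient f x i := by
    rw [pd, ← toDual_gradient, InnerProductSpace.toDual_apply_apply,
      EuclideanSpace.inner_single_right]
    simp
  rw [this, sq]

section Solid

variable {l m : ℕ} {f g : EuclideanSpace ℝ (Fin n) → ℝ}

lemma IsSolidHarmonic.homog (hf : IsSolidHarmonic l f) :
    ∀ c : ℝ, 0 < c → ∀ x, c ^ 0 * f (c • x) = c ^ l * f x := fun c hc x => by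
  rw [pow_zero, one_mul, hf.2.1 c hc.le]

lemma IsSolidHarmonic.homog1 (hf : IsSolidHarmonic l f) (i : Fin n) :
    ∀ c : ℝ, 0 < c → ∀ x, c ^ 1 * pd i f (c • x) = c ^ l * pd i f x :=
  fderiv_homog hf.homog (differentiable_of_smooth hf.1) _

lemma IsSolidHarmonic.homog2 (hf : IsSolidHarmonic l f) (i j : Fin n) :
    ∀ c : ℝ, 0 < c → ∀ x, c ^ 2 * pd j (pd i f) (c • x) = c ^ l * pd j (pd i f) x :=
  fderiv_homog (hf.homog1 i) (differentiable_of_smooth (contDiff_pd hf.1 i)) _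

/-- Euler's identity for a positively homogeneous function of degree `l`. -/
lemma IsSolidHarmonic.euler (hf : IsSolidHarmonic l f) (x : EuclideanSpace ℝ (Fin n)) :
    ∑ i, x i * pd i f x = l * f x := by
  rw [← fderiv_eq_sum]
  have h1 : HasDerivAt (fun c : ℝ => f (c • x)) (fderiv ℝ f x x) 1 := by
    have hF : HasFDerivAt f (fderiv ℝ f x) ((1 : ℝ) • x) := by
      rw [one_smul]; exact (differentiable_of_smooth hf.1 x).hasFDerivAt
    have := hF.comp_hasDerivAt (1 : ℝ) ((hasDerivAt_id (1 : ℝ)).smul_const x)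
    rw [one_smul] at this
    exact this
  have h2 : HasDerivAt (fun c : ℝ => f (c • x)) (l * f x) 1 := by
    have h3 := (hasDerivAt_pow l (1 : ℝ)).mul_const (f x)
    simp only [one_pow, mul_one] at h3
    refine h3.congr_of_eventuallyEq ?_
    filter_upwards [lt_mem_nhds (zero_lt_one : (0 : ℝ) < 1)] with c hc using hf.2.1 c hc.le x
  exact h1.unique h2

/-- Green's identity on `ℝⁿ` against the Gaussian weight: by harmonicity of `g` only the term
`f ∇g · ∇e^{-|x|²} = -2 f (x · ∇g) e^{-|x|²}` survives, and Euler's identity evaluates it. -/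
lemma gauss_green (hf : IsSolidHarmonic l f) (hg : IsSolidHarmonic m g) :
    ∫ x, gw x * ∑ i, pd i f x * pd i g x = 2 * m * ∫ x, gw x * (f x * g x) := by
  have cf := hf.1.continuous
  have cf1 := fun i => (contDiff_pd hf.1 i).continuous
  have cg1 := fun i => (contDiff_pd hg.1 i).continuous
  have cg2 := fun i => (contDiff_pd (contDiff_pd hg.1 i) i).continuous
  have pf := polyGrowth_of_homog cf 0 l hf.homog
  have pf1 := fun i => polyGrowth_of_homog (cf1 i) 1 l (hf.homog1 i)
  have pg1 := fun i => polyGrowth_of_homog (cg1 i) 1 m (hg.homog1 i)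
  have pg2 := fun i => polyGrowth_of_homog (cg2 i) 2 m (hg.homog2 i i)
  have cx : ∀ i : Fin n, Continuous (fun x : EuclideanSpace ℝ (Fin n) => x i) :=
    fun i => by fun_prop
  have I1 : ∀ i, Integrable (fun x => gw x * (pd i f x * pd i g x)) := fun i =>
    integrable_gw_mul ((cf1 i).mul (cg1 i)) ((pf1 i).mul (pg1 i))
  have I2 : ∀ i, Integrable (fun x => gw x * (f x * pd i g x)) := fun i =>
    integrable_gw_mul (cf.mul (cg1 i)) (pf.mul (pg1 i))
  have I3 : ∀ i, Integrable (fun x => gw x * (f x * pd i (pd i g) x)) := fun i =>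
    integrable_gw_mul (cf.mul (cg2 i)) (pf.mul (pg2 i))
  have I4 : ∀ i, Integrable (fun x => gw x * (f x * (x i * pd i g x))) := fun i =>
    integrable_gw_mul (cf.mul ((cx i).mul (cg1 i))) (pf.mul ((polyGrowth_coord i).mul (pg1 i)))
  have hder : ∀ i x, fderiv ℝ (fun y => gw y * pd i g y) x (EuclideanSpace.single i 1) =
      gw x * pd i (pd i g) x - 2 * (gw x * (x i * pd i g x)) := by
    intro i x
    rw [fderiv_fun_mul (differentiable_of_smooth contDiff_gw x)
      (differentiable_of_smooth (contDiff_pd hg.1 i) x)]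
    simp only [FunLike.coe_add, Pi.add_apply, FunLike.coe_smul, Pi.smul_apply,
      smul_eq_mul, fderiv_gw]
    simp only [pd]
    ring
  have key : ∀ i, ∫ x, gw x * (pd i f x * pd i g x) =
      ∫ x, (2 * (gw x * (f x * (x i * pd i g x))) - gw x * (f x * pd i (pd i g) x)) := by
    intro i
    have := integral_mul_fderiv_eq_neg_fderiv_mul_of_integrable (μ := volume) (f := f)
      (g := fun y => gw y * pd i g y) (v := EuclideanSpace.single i 1)
      ((I1 i).congr (.of_forall fun x => by simp only [pd]; ring))
      ((((I3 i).sub ((I4 i).const_mul 2))).congr (.of_forall fun x => by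
        simp only [hder, Pi.sub_apply]; ring))
      ((I2 i).congr (.of_forall fun x => by ring))
      (fun x _ => differentiable_of_smooth hf.1 x)
      (fun x _ => (differentiable_of_smooth contDiff_gw x).mul
        (differentiable_of_smooth (contDiff_pd hg.1 i) x))
    simp only [hder] at this
    calc ∫ x, gw x * (pd i f x * pd i g x)
        = ∫ x, fderiv ℝ f x (EuclideanSpace.single i 1) * (gw x * pd i g x) := by
          congr 1; ext x; simp only [pd]; ring
      _ = -∫ x, f x * (gw x * pd i (pd i g) x - 2 * (gw x * (x i * pd i g x))) := by
          rw [this, neg_neg]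
      _ = _ := by
          rw [← integral_neg]; congr 1; ext x; ring
  calc ∫ x, gw x * ∑ i, pd i f x * pd i g x
      = ∑ i, ∫ x, gw x * (pd i f x * pd i g x) := by
        rw [← integral_finsetSum _ fun i _ => I1 i]
        simp only [Finset.mul_sum]
    _ = ∫ x, ∑ i, (2 * (gw x * (f x * (x i * pd i g x))) -
          gw x * (f x * pd i (pd i g) x)) := by
        have I5 : ∀ i ∈ Finset.univ, Integrable (fun x => 2 * (gw x * (f x * (x i * pd i g x))) -
          gw x * (f x * pd i (pd i g) x)) := fun i _ => ((I4 i).const_mul 2).sub (I3 i)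
        rw [integral_finsetSum _ I5]
        exact Finset.sum_congr rfl fun i _ => key i
    _ = ∫ x, 2 * m * (gw x * (f x * g x)) := by
        congr 1; ext x
        have hl : ∑ i, pd i (pd i g) x = 0 := hg.2.2 x
        rw [Finset.sum_sub_distrib]
        simp only [← Finset.mul_sum]
        rw [hl, hg.euler]; ring
    _ = _ := integral_const_mul _ _

end Solid

/-! ### Polar coordinates and integrals of solid harmonics -/

/-- Polar coordinates for a radial weight times a positively homogeneous function. -/
lemma integral_polar (hn : 2 ≤ n) (w : ℝ → ℝ) {F : EuclideanSpace ℝ (Fin n) → ℝ} {m : ℕ}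
    (hF : ∀ c : ℝ, 0 < c → ∀ x, F (c • x) = c ^ m * F x) :
    ∫ x, w ‖x‖ * F x = (∫ r in Set.Ioi (0 : ℝ), r ^ (n - 1) * (w r * r ^ m)) *
      ∫ θ : sphere (0 : EuclideanSpace ℝ (Fin n)) 1, F θ ∂(sphMeas n) := by
  have : Nonempty (Fin n) := ⟨⟨0, by omega⟩⟩
  calc ∫ x, w ‖x‖ * F x
      = ∫ x : ({(0)}ᶜ : Set (EuclideanSpace ℝ (Fin n))), w ‖x.1‖ * F x.1
          ∂((volume : Measure (EuclideanSpace ℝ (Fin n))).comap (↑)) := by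
        rw [integral_subtype_comap (measurableSet_singleton _).compl (fun x => w ‖x‖ * F x),
          restrict_compl_singleton]
    _ = ∫ x : ({(0)}ᶜ : Set (EuclideanSpace ℝ (Fin n))),
          (fun p : sphere (0 : EuclideanSpace ℝ (Fin n)) 1 × Set.Ioi (0 : ℝ) =>
            F p.1 * (w p.2 * (p.2 : ℝ) ^ m)) (homeomorphUnitSphereProd _ x)
          ∂((volume : Measure (EuclideanSpace ℝ (Fin n))).comap (↑)) := by
        congr 1
        ext ⟨x, hx⟩
        have hx0 : 0 < ‖x‖ := norm_pos_iff.2 hx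
        have h1 := hF ‖x‖ hx0 (‖x‖⁻¹ • x)
        rw [smul_smul, mul_inv_cancel₀ hx0.ne', one_smul] at h1
        simp only [homeomorphUnitSphereProd_apply_fst_coe,
          homeomorphUnitSphereProd_apply_snd_coe]
        rw [h1]; ring
    _ = (∫ θ : sphere (0 : EuclideanSpace ℝ (Fin n)) 1, F θ ∂(sphMeas n)) *
          ∫ r : Set.Ioi (0 : ℝ), w r * (r : ℝ) ^ m ∂(Measure.volumeIoiPow (n - 1)) := by
        have h := (Measure.measurePreserving_homeomorphUnitSphereProd
          (volume : Measure (EuclideanSpace ℝ (Fin n)))).integral_comp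
          (Homeomorph.measurableEmbedding _)
          (fun p : sphere (0 : EuclideanSpace ℝ (Fin n)) 1 × Set.Ioi (0 : ℝ) =>
            F p.1 * (w p.2 * (p.2 : ℝ) ^ m))
        rw [finrank_euclideanSpace_fin] at h
        refine h.trans ?_
        exact integral_prod_mul (fun θ : sphere (0 : EuclideanSpace ℝ (Fin n)) 1 => F θ)
          (fun r : Set.Ioi (0 : ℝ) => w r * (r : ℝ) ^ m)
    _ = _ := by
        rw [mul_comm]
        congr 1
        simp only [Measure.volumeIoiPow, ENNReal.ofReal]
        rw [integral_withDensity_eq_integral_smul,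
          integral_subtype_comap measurableSet_Ioi
            fun a ↦ Real.toNNReal (a ^ (n - 1)) • (w a * a ^ m)]
        · refine setIntegral_congr_fun measurableSet_Ioi fun x hx => ?_
          simp only [NNReal.smul_def, Real.coe_toNNReal _ (pow_nonneg (le_of_lt hx) _),
            smul_eq_mul]
        · exact (measurable_subtype_coe.pow_const _).real_toNNReal

lemma radial_gauss (n m : ℕ) :
    ∫ r in Set.Ioi (0 : ℝ), r ^ (n - 1) * (Real.exp (-r ^ 2) * r ^ m) =
      1 / 2 * Real.Gamma (((n - 1 + m : ℕ) + 1 : ℝ) / 2) := by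
  rw [← integral_rpow_mul_exp_neg_rpow (by norm_num) (by
    have : (0 : ℝ) ≤ ((n - 1 + m : ℕ) : ℝ) := Nat.cast_nonneg _
    linarith)]
  refine setIntegral_congr_fun measurableSet_Ioi fun x hx => ?_
  simp only [Real.rpow_natCast, Real.rpow_ofNat]
  ring

/-- Integrals of homogeneous functions over `B_{1/2}`. -/
lemma integral_half_ball (hn : 2 ≤ n) {F : EuclideanSpace ℝ (Fin n) → ℝ} {m : ℕ}
    (hF : ∀ c : ℝ, 0 < c → ∀ x, F (c • x) = c ^ m * F x) :
    ∫ x in ball (0 : EuclideanSpace ℝ (Fin n)) (1 / 2), F x =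
      (1 / 2) ^ (n + m) / (n + m) *
        ∫ θ : sphere (0 : EuclideanSpace ℝ (Fin n)) 1, F θ ∂(sphMeas n) := by
  have h := integral_polar hn ((Set.Iio (1 / 2 : ℝ)).indicator 1) hF
  have h1 : ∫ x, (Set.Iio (1 / 2 : ℝ)).indicator 1 ‖x‖ * F x =
      ∫ x in ball (0 : EuclideanSpace ℝ (Fin n)) (1 / 2), F x := by
    rw [← integral_indicator measurableSet_ball]
    congr 1; ext x
    by_cases hx : ‖x‖ < 1 / 2
    · rw [Set.indicator_of_mem (by exact hx), Set.indicator_of_mem (by simpa using hx)]; simp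
    · rw [Set.indicator_of_notMem (by exact hx), Set.indicator_of_notMem (by simpa using hx)]
      simp
  have h2 : ∫ r in Set.Ioi (0 : ℝ), r ^ (n - 1) * ((Set.Iio (1 / 2 : ℝ)).indicator 1 r * r ^ m) =
      (1 / 2) ^ (n + m) / (n + m) := by
    have e : ∀ r : ℝ, r ^ (n - 1) * ((Set.Iio (1 / 2 : ℝ)).indicator 1 r * r ^ m) =
        (Set.Iio (1 / 2 : ℝ)).indicator (fun r => r ^ (n - 1 + m)) r := by
      intro r
      by_cases hr : r < 1 / 2
      · rw [Set.indicator_of_mem (by exact hr), Set.indicator_of_mem (by exact hr), pow_add]; simp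
      · rw [Set.indicator_of_notMem (by exact hr), Set.indicator_of_notMem (by exact hr)]; simp
    simp_rw [e]
    rw [setIntegral_indicator measurableSet_Iio, Set.Ioi_inter_Iio, ← integral_Ioc_eq_integral_Ioo,
      ← intervalIntegral.integral_of_le (by norm_num), integral_pow]
    have : n - 1 + m + 1 = n + m := by omega
    rw [this, zero_pow (by omega), sub_zero]
    congr 1
    exact_mod_cast congrArg (Nat.cast : ℕ → ℝ) this
  rw [← h1, h, h2]

section Solid2

variable {l m : ℕ} {f g : EuclideanSpace ℝ (Fin n) → ℝ}

lemma IsSolidHarmonic.homog_mul (hf : IsSolidHarmonic l f) (hg : IsSolidHarmonic m g) :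
    ∀ c : ℝ, 0 < c → ∀ x, (fun x => f x * g x) (c • x) = c ^ (l + m) * (fun x => f x * g x) x := by
  intro c hc x
  simp only [hf.2.1 c hc.le, hg.2.1 c hc.le]; ring

/-- Solid harmonics of different degrees are orthogonal on the sphere: the Gaussian-weighted
Dirichlet form is symmetric, while `gauss_green` evaluates it with either degree in front. -/
lemma sphere_orthogonal (hn : 2 ≤ n) (hf : IsSolidHarmonic l f) (hg : IsSolidHarmonic m g)
    (hlm : l ≠ m) :
    ∫ θ : sphere (0 : EuclideanSpace ℝ (Fin n)) 1, f θ * g θ ∂(sphMeas n) = 0 := by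
  have h1 := gauss_green hf hg
  have h2 := gauss_green hg hf
  simp only [mul_comm (g _), mul_comm (pd _ g _)] at h2
  have h3 := integral_polar hn (fun r => Real.exp (-r ^ 2))
    (F := fun x => f x * g x) (hf.homog_mul hg)
  rw [radial_gauss] at h3
  have h4 : ∫ x, gw x * (f x * g x) = 0 := by
    have h5 : ((l : ℝ) - m) * ∫ x, gw x * (f x * g x) = 0 := by linarith
    rcases mul_eq_zero.1 h5 with h | h
    · exact absurd (by exact_mod_cast sub_eq_zero.1 h) hlm
    · exact h
  have hG : 0 < Real.Gamma (((n - 1 + (l + m) : ℕ) + 1 : ℝ) / 2) :=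
    Real.Gamma_pos_of_pos (by positivity)
  have h6 : (∫ x, gw x * (f x * g x)) = _ := h3
  rw [h4] at h6
  rcases mul_eq_zero.1 h6.symm with h | h
  · linarith
  · exact h

lemma IsSolidHarmonic.homog_gradient (hl : 1 ≤ l) (hf : IsSolidHarmonic l f) :
    ∀ c : ℝ, 0 < c → ∀ x, (fun x => ‖gradient f x‖ ^ 2) (c • x) =
      c ^ (l - 1 + (l - 1)) * (fun x => ‖gradient f x‖ ^ 2) x := by
  intro c hc x
  simp only [norm_gradient_sq, Finset.mul_sum]
  refine Finset.sum_congr rfl fun i _ => ?_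
  have h : pd i f (c • x) = c ^ (l - 1) * pd i f x := by
    have h1 := hf.homog1 i c hc x
    obtain ⟨k, rfl⟩ := Nat.exists_eq_add_of_le hl
    rw [pow_add, mul_assoc] at h1
    simpa using mul_left_cancel₀ (pow_ne_zero 1 hc.ne') h1
  rw [h]; ring

/-- `∫_{∂B₁} |∇f|² = l (2l + n - 2) ∫_{∂B₁} f²`; the factor `2l + n - 2` is the quotient
of two consecutive Gaussian radial moments. -/
lemma sphere_gradient (hn : 2 ≤ n) (hl : 1 ≤ l) (hf : IsSolidHarmonic l f) :
    ∫ θ : sphere (0 : EuclideanSpace ℝ (Fin n)) 1, ‖gradient f θ‖ ^ 2 ∂(sphMeas n) =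
      l * (2 * l + n - 2) *
        ∫ θ : sphere (0 : EuclideanSpace ℝ (Fin n)) 1, f θ ^ 2 ∂(sphMeas n) := by
  have h1 := gauss_green hf hf
  simp only [← norm_gradient_sq] at h1
  have h2 := integral_polar hn (fun r => Real.exp (-r ^ 2))
    (F := fun x => f x * f x) (hf.homog_mul hf)
  have h3 := integral_polar hn (fun r => Real.exp (-r ^ 2))
    (F := fun x => ‖gradient f x‖ ^ 2) (hf.homog_gradient hl)
  rw [radial_gauss] at h2 h3
  have e1 : (((n - 1 + (l + l) : ℕ) + 1 : ℝ) / 2) = ((2 * l + n - 2 : ℝ) / 2) + 1 := by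
    push_cast [Nat.cast_sub (show 1 ≤ n by omega)]; ring
  have e2 : (((n - 1 + (l - 1 + (l - 1)) : ℕ) + 1 : ℝ) / 2) = ((2 * l + n - 2 : ℝ) / 2) := by
    push_cast [Nat.cast_sub (show 1 ≤ n by omega), Nat.cast_sub hl]; ring
  have hl' : (1 : ℝ) ≤ l := by exact_mod_cast hl
  have hn' : (2 : ℝ) ≤ n := by exact_mod_cast hn
  have hs : 0 < (2 * l + n - 2 : ℝ) / 2 := by linarith
  rw [e1, Real.Gamma_add_one hs.ne'] at h2
  rw [e2] at h3
  have hG := Real.Gamma_pos_of_pos hs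
  have h2' : (∫ x, gw x * (f x * f x)) = _ := h2
  have h3' : (∫ x, gw x * ‖gradient f x‖ ^ 2) = _ := h3
  rw [h2', h3'] at h1
  simp only [← sq] at h1
  have h4 : (1 / 2 * Real.Gamma ((2 * l + n - 2 : ℝ) / 2)) ≠ 0 := by positivity
  apply mul_left_cancel₀ h4
  rw [h1]; ring

end Solid2

/-! ### Cauchy-Schwarz and square integrability -/

lemma cauchy_schwarz {α : Type*} [MeasurableSpace α] {μ : Measure α} {f g : α → ℝ}
    (hf : MemLp f 2 μ) (hg : MemLp g 2 μ) :
    (∫ x, f x * g x ∂μ) ^ 2 ≤ (∫ x, f x ^ 2 ∂μ) * ∫ x, g x ^ 2 ∂μ := by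
  have hfg : Integrable (fun x => f x * g x) μ := hf.integrable_mul hg
  -- the quadratic `t ↦ ∫ (f - t g)²` is nonnegative, so its discriminant is nonpositive
  have key : ∀ t : ℝ, 0 ≤ (∫ x, g x ^ 2 ∂μ) * (t * t) + (-2 * ∫ x, f x * g x ∂μ) * t +
      ∫ x, f x ^ 2 ∂μ := by
    intro t
    have h0 : 0 ≤ ∫ x, (f x - t * g x) ^ 2 ∂μ := integral_nonneg fun x => sq_nonneg _
    have h1 : ∫ x, (f x - t * g x) ^ 2 ∂μ =
        ∫ x, ((f x ^ 2 - 2 * t * (f x * g x)) + t ^ 2 * g x ^ 2) ∂μ := by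
      congr 1; ext x; ring
    have h2 : Integrable (fun x => f x ^ 2 - 2 * t * (f x * g x)) μ :=
      hf.integrable_sq.sub (hfg.const_mul _)
    rw [h1, integral_add h2 (hg.integrable_sq.const_mul _),
      integral_sub hf.integrable_sq (hfg.const_mul _), integral_const_mul,
      integral_const_mul] at h0
    linarith
  have := discrim_le_zero key
  rw [discrim] at this
  linarith

lemma Continuous.integrableOn_bdd_ball {F : EuclideanSpace ℝ (Fin n) → ℝ} (hF : Continuous F)
    (r : ℝ) : IntegrableOn F (ball 0 r) :=
  (hF.continuousOn.integrableOn_compact (isCompact_closedBall 0 r)).mono_set ball_subset_closedBall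

lemma Continuous.memLp_ball {F : EuclideanSpace ℝ (Fin n) → ℝ} (hF : Continuous F)
    (r : ℝ) : MemLp F 2 (volume.restrict (ball 0 r)) :=
  (memLp_two_iff_integrable_sq hF.aestronglyMeasurable).2 ((hF.pow 2).integrableOn_bdd_ball r)

instance isFiniteMeasure_sphMeas : IsFiniteMeasure (sphMeas n) := by unfold sphMeas; infer_instance

lemma memLp_sphere {F : EuclideanSpace ℝ (Fin n) → ℝ} (hF : Continuous F) :
    MemLp (fun θ : sphere (0 : EuclideanSpace ℝ (Fin n)) 1 => F θ) 2 (sphMeas n) := by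
  have hc : Continuous (fun θ : sphere (0 : EuclideanSpace ℝ (Fin n)) 1 => F θ) :=
    hF.comp continuous_subtype_val
  refine (memLp_two_iff_integrable_sq hc.aestronglyMeasurable).2 ?_
  exact (hc.pow 2).integrable_of_hasCompactSupport (HasCompactSupport.of_compactSpace _)

/-! ### The pairing on the half ball and the lower bound -/

section Main

variable {l : ℕ} {g : EuclideanSpace ℝ (Fin n) → ℝ}

lemma half_ball_mul (hn : 2 ≤ n) {m : ℕ} {f : EuclideanSpace ℝ (Fin n) → ℝ}
    (hf : IsSolidHarmonic m f) (hg : IsSolidHarmonic l g) :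
    ∫ x in ball (0 : EuclideanSpace ℝ (Fin n)) (1 / 2), f x * g x =
      (1 / 2) ^ (n + (m + l)) / (n + (m + l : ℕ)) *
        ∫ θ : sphere (0 : EuclideanSpace ℝ (Fin n)) 1, f θ * g θ ∂(sphMeas n) :=
  integral_half_ball hn (F := fun x => f x * g x) (hf.homog_mul hg)

/-- The squared `H¹(B_{1/2})` norm of a solid harmonic normalized on the sphere. -/
lemma h1_norm (hn : 2 ≤ n) (hl : 1 ≤ l) (hg : IsSolidHarmonic l g)
    (hg1 : (∫ θ : sphere (0 : EuclideanSpace ℝ (Fin n)) 1, g θ ^ 2 ∂(sphMeas n)) = 1) :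
    ∫ y in ball (0 : EuclideanSpace ℝ (Fin n)) (1 / 2), (g y ^ 2 + ‖gradient g y‖ ^ 2) =
      (1 / 2) ^ (n + (l + l)) / (n + (l + l : ℕ)) * (1 + 4 * l * (2 * l + n)) := by
  have cg := hg.1.continuous
  have cgr : Continuous (fun y => ‖gradient g y‖ ^ 2) := by
    simp only [norm_gradient_sq]
    exact continuous_finsetSum _ fun i _ =>
      (contDiff_pd hg.1 i).continuous.mul (contDiff_pd hg.1 i).continuous
  have I1 : IntegrableOn (fun y => g y ^ 2) (ball 0 (1 / 2)) :=
    (cg.pow 2).integrableOn_bdd_ball _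
  rw [integral_add I1 (cgr.integrableOn_bdd_ball _),
    integral_half_ball hn (F := fun x => ‖gradient g x‖ ^ 2) (hg.homog_gradient hl),
    sphere_gradient hn hl hg, hg1]
  have h := half_ball_mul hn hg hg
  simp only [← sq] at h
  rw [h, hg1]
  obtain ⟨k, rfl⟩ := Nat.exists_eq_add_of_le' hl
  have hn' : (2 : ℝ) ≤ n := by exact_mod_cast hn
  have hk : (0 : ℝ) ≤ k := Nat.cast_nonneg k
  have e : n + (k + 1 + (k + 1)) = n + (k + k) + 2 := by ring
  simp only [Nat.add_sub_cancel]
  rw [e, pow_add]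
  push_cast
  have h1 : (n : ℝ) + (k + k) ≠ 0 := by positivity
  have h2 : (n : ℝ) + (k + 1 + (k + 1)) ≠ 0 := by positivity
  field_simp
  ring

/-- Only the degree `l` component of `u` is seen by a solid harmonic of degree `l` on `B_{1/2}`. -/
lemma pairing (hn : 2 ≤ n) (hg : IsSolidHarmonic l g)
    {u : EuclideanSpace ℝ (Fin n) → ℝ} {P : ℕ → EuclideanSpace ℝ (Fin n) → ℝ}
    (hP : ∀ l', IsSolidHarmonic l' (P l'))
    (hu : MemLp u 2 (volume.restrict (ball (0 : EuclideanSpace ℝ (Fin n)) 1)))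
    (hlim : Filter.Tendsto
          (fun N => ∫ x in ball (0 : EuclideanSpace ℝ (Fin n)) 1,
            (u x - ∑ l' ∈ Finset.range N, P l' x) ^ 2) Filter.atTop (nhds 0)) :
    ∫ x in ball (0 : EuclideanSpace ℝ (Fin n)) (1 / 2), u x * g x =
      ∫ x in ball (0 : EuclideanSpace ℝ (Fin n)) (1 / 2), P l x * g x := by
  have hsub : ball (0 : EuclideanSpace ℝ (Fin n)) (1 / 2) ⊆ ball 0 1 :=
    ball_subset_ball (by norm_num)
  have cg := hg.1.continuous
  have mg := cg.memLp_ball (1 / 2)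
  have mu : MemLp u 2 (volume.restrict (ball (0 : EuclideanSpace ℝ (Fin n)) (1 / 2))) :=
    hu.mono_measure (Measure.restrict_mono hsub le_rfl)
  have cS : ∀ N, Continuous (fun x => ∑ l' ∈ Finset.range N, P l' x) := fun N =>
    continuous_finsetSum _ fun i _ => (hP i).1.continuous
  set A := ∫ x in ball (0 : EuclideanSpace ℝ (Fin n)) (1 / 2), g x ^ 2 with hA
  have key : ∀ N, l < N →
      ((∫ x in ball (0 : EuclideanSpace ℝ (Fin n)) (1 / 2), u x * g x) -
        ∫ x in ball (0 : EuclideanSpace ℝ (Fin n)) (1 / 2), P l x * g x) ^ 2 ≤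
      (∫ x in ball (0 : EuclideanSpace ℝ (Fin n)) 1,
            (u x - ∑ l' ∈ Finset.range N, P l' x) ^ 2) * A := by
    intro N hN
    have hSg : ∫ x in ball (0 : EuclideanSpace ℝ (Fin n)) (1 / 2),
        (∑ l' ∈ Finset.range N, P l' x) * g x =
        ∫ x in ball (0 : EuclideanSpace ℝ (Fin n)) (1 / 2), P l x * g x := by
      simp only [Finset.sum_mul]
      have I : ∀ i ∈ Finset.range N, IntegrableOn (fun x => P i x * g x) (ball 0 (1 / 2)) :=
        fun i _ => ((hP i).1.continuous.mul cg).integrableOn_bdd_ball _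
      rw [integral_finsetSum _ I]
      refine Finset.sum_eq_single_of_mem l (Finset.mem_range.2 hN) fun i _ hi => ?_
      rw [half_ball_mul hn (hP i) hg, sphere_orthogonal hn (hP i) hg hi, mul_zero]
    have hd : MemLp (fun x => u x - ∑ l' ∈ Finset.range N, P l' x) 2
        (volume.restrict (ball (0 : EuclideanSpace ℝ (Fin n)) (1 / 2))) :=
      mu.sub ((cS N).memLp_ball _)
    have hd1 : MemLp (fun x => u x - ∑ l' ∈ Finset.range N, P l' x) 2
        (volume.restrict (ball (0 : EuclideanSpace ℝ (Fin n)) 1)) :=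
      hu.sub ((cS N).memLp_ball _)
    have h1 := cauchy_schwarz hd mg
    have h2 : ∫ x in ball (0 : EuclideanSpace ℝ (Fin n)) (1 / 2),
        (u x - ∑ l' ∈ Finset.range N, P l' x) * g x =
        (∫ x in ball (0 : EuclideanSpace ℝ (Fin n)) (1 / 2), u x * g x) -
        ∫ x in ball (0 : EuclideanSpace ℝ (Fin n)) (1 / 2), P l x * g x := by
      have I1 : IntegrableOn (fun x => u x * g x) (ball 0 (1 / 2)) := mu.integrable_mul mg
      have I2 : IntegrableOn (fun x => (∑ l' ∈ Finset.range N, P l' x) * g x)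
        (ball 0 (1 / 2)) := ((cS N).mul cg).integrableOn_bdd_ball _
      rw [← hSg, ← integral_sub I1 I2]
      simp only [sub_mul]
    rw [h2] at h1
    refine h1.trans (mul_le_mul_of_nonneg_right ?_ (integral_nonneg fun x => sq_nonneg _))
    exact setIntegral_mono_set hd1.integrable_sq (.of_forall fun x => sq_nonneg _)
      hsub.eventuallyLE
  have h0 := ge_of_tendsto (hlim.mul_const A)
    ((Filter.eventually_gt_atTop l).mono fun N hN => key N hN)
  rw [zero_mul] at h0
  exact sub_eq_zero.1 (pow_eq_zero_iff two_ne_zero |>.1 (le_antisymm h0 (sq_nonneg _)))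

/-- The scalar form of the final estimate: `A` is `‖g‖²_{L²(B_{1/2})}`, `t` the normalizing factor
of `h_l` and `s` the coefficient of `u` along `g` on the sphere. -/
lemma coeff_bound {A t s L N : ℝ} (hA : 0 < A) (hL : 1 ≤ L) (hN0 : 0 ≤ N) (hN : N ≤ L)
    (ht : t = 1 / Real.sqrt (A * (1 + 4 * L * (2 * L + N))))
    (h : (t * A - A * s) ^ 2 ≤ ((10 * L)⁻¹) ^ 2 * A) :
    1 / (100 * L ^ 2 * A) ≤ s ^ 2 := by
  have hrA : 0 < Real.sqrt A := Real.sqrt_pos.2 hA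
  have hq0 : 0 < 1 / (10 * L * Real.sqrt A) := by positivity
  have hq2 : (1 / (10 * L * Real.sqrt A)) ^ 2 = 1 / (100 * L ^ 2 * A) := by
    rw [div_pow, mul_pow, mul_pow, Real.sq_sqrt hA.le]; norm_num
  have ht2 : 2 * (1 / (10 * L * Real.sqrt A)) ≤ t := by
    have e : 2 * (1 / (10 * L * Real.sqrt A)) = 1 / (Real.sqrt A * (5 * L)) := by
      field_simp; norm_num
    rw [ht, e, Real.sqrt_mul hA.le]
    gcongr
    exact Real.sqrt_le_iff.2 ⟨by positivity, by nlinarith⟩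
  have hts : (t - s) ^ 2 ≤ (1 / (10 * L * Real.sqrt A)) ^ 2 := by
    rw [hq2, le_div_iff₀ (by positivity)]
    have e : (t * A - A * s) ^ 2 = A * ((t - s) ^ 2 * A) := by ring
    rw [e, mul_comm (((10 * L)⁻¹) ^ 2) A] at h
    have h' := le_of_mul_le_mul_left h hA
    calc (t - s) ^ 2 * (100 * L ^ 2 * A) = (t - s) ^ 2 * A * (100 * L ^ 2) := by ring
      _ ≤ ((10 * L)⁻¹) ^ 2 * (100 * L ^ 2) := by gcongr
      _ = 1 := by field_simp; norm_num
  have h1 := (abs_le_of_sq_le_sq' hts hq0.le).2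
  rw [← hq2]
  exact pow_le_pow_left₀ hq0.le (by linarith) 2

/-- Since `1/A = 2^n 4^l (n + 2l)`, one factor `2^l` absorbs the polynomial denominator and the
other dominates `e^{l/5}`. -/
lemma exp_bound (n l : ℕ) (hl : 1 ≤ l) :
    (1 / 10 * Real.exp (1 / 10 * l)) ^ 2 ≤
      1 / (100 * (l : ℝ) ^ 2 * ((1 / 2) ^ (n + (l + l)) / (n + (l + l : ℕ)))) := by
  have hl' : (1 : ℝ) ≤ l := by exact_mod_cast hl
  have h1 : Real.exp (1 / 10 * l) ^ 2 ≤ 2 ^ l := by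
    rw [← Real.exp_nat_mul]
    calc Real.exp ((2 : ℕ) * (1 / 10 * l)) ≤ Real.exp (l * Real.log 2) := by
          rw [Real.exp_le_exp]
          have := Real.log_two_gt_d9
          push_cast
          nlinarith
      _ = 2 ^ l := by rw [Real.exp_nat_mul, Real.exp_log (by norm_num)]
  have h2 : (l : ℝ) ≤ 2 ^ l := by exact_mod_cast Nat.lt_two_pow_self.le
  have h3 : (1 : ℝ) ≤ 2 ^ n := one_le_pow₀ (by norm_num)
  have e : 1 / (100 * (l : ℝ) ^ 2 * ((1 / 2) ^ (n + (l + l)) / (n + (l + l : ℕ)))) =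
      2 ^ n * (2 ^ l * 2 ^ l) * (n + (l + l)) / (100 * (l : ℝ) ^ 2) := by
    rw [one_div_pow, pow_add, pow_add]
    push_cast
    field_simp
  rw [e, le_div_iff₀ (by positivity)]
  calc (1 / 10 * Real.exp (1 / 10 * l)) ^ 2 * (100 * (l : ℝ) ^ 2)
      = Real.exp (1 / 10 * l) ^ 2 * ((l : ℝ) * l) := by ring
    _ ≤ (2 : ℝ) ^ l * (2 ^ l * l) := by gcongr
    _ = (1 : ℝ) * (2 ^ l * 2 ^ l) * l := by ring
    _ ≤ (2 : ℝ) ^ n * (2 ^ l * 2 ^ l) * (n + (l + l)) := by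
        gcongr
        have : (0 : ℝ) ≤ n := Nat.cast_nonneg n
        linarith

end Main

/-- optimality of the exponential cost in Runge approximation for harmonic
functions: with `h_l = g_l / ‖g_l‖_{H¹(B_{1/2})}` where `g_l(rθ) = r^l ψ_{l1}(θ)` is a solid
harmonic with `L²(∂B₁)`-normalized `ψ_{l1}`, there is `c > 0` such that for all large `l`, any
harmonic `u ∈ H¹(B₁)` (given via its spherical harmonic expansion `u = Σ_{l'} P_{l'}`, so that
`‖u‖²_{H^{1/2}(∂B₁)} = Σ_{l'} (1+λ_{l'}^{1/2}) ‖P_{l'}‖²_{L²(∂B₁)}` with `λ_{l'} = l'(l'+n−2)`)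
with `‖h_l − u‖_{L²(B_{1/2})} ≤ (10l)⁻¹` satisfies `‖u‖_{H^{1/2}(∂B₁)} ≥ c e^{c l}`. -/
theorem stmt9 (hn : 2 ≤ n) :
    ∃ c : ℝ, 0 < c ∧ ∃ l₀ : ℕ, ∀ l : ℕ, l₀ ≤ l →
      ∀ g : EuclideanSpace ℝ (Fin n) → ℝ, IsSolidHarmonic l g →
        (∫ θ : sphere (0 : EuclideanSpace ℝ (Fin n)) 1, g θ ^ 2 ∂(sphMeas n)) = 1 →
      ∀ (u : EuclideanSpace ℝ (Fin n) → ℝ) (P : ℕ → EuclideanSpace ℝ (Fin n) → ℝ),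
        (∀ l', IsSolidHarmonic l' (P l')) →
        DifferentiableOn ℝ u (ball (0 : EuclideanSpace ℝ (Fin n)) 1) →
        IntegrableOn (fun x => u x ^ 2 + ‖gradient u x‖ ^ 2)
          (ball (0 : EuclideanSpace ℝ (Fin n)) 1) volume →
        Filter.Tendsto
          (fun N => ∫ x in ball (0 : EuclideanSpace ℝ (Fin n)) 1,
            (u x - ∑ l' ∈ Finset.range N, P l' x) ^ 2) Filter.atTop (nhds 0) →
        Real.sqrt (∫ x in ball (0 : EuclideanSpace ℝ (Fin n)) (1/2),
            (g x / Real.sqrt (∫ y in ball (0 : EuclideanSpace ℝ (Fin n)) (1/2),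
              (g y ^ 2 + ‖gradient g y‖ ^ 2)) - u x) ^ 2) ≤ (10 * l : ℝ)⁻¹ →
        ENNReal.ofReal ((c * Real.exp (c * l)) ^ 2) ≤
          ∑' l' : ℕ, ENNReal.ofReal ((1 + Real.sqrt (l' * (l' + n - 2))) *
            ∫ θ : sphere (0 : EuclideanSpace ℝ (Fin n)) 1, P l' θ ^ 2 ∂(sphMeas n)) := by
  refine ⟨1 / 10, by norm_num, n, fun l hl g hg hg1 u P hP hud huI hlim happ => ?_⟩
  have hl1 : 1 ≤ l := by omega
  have hl' : (1 : ℝ) ≤ l := by exact_mod_cast hl1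
  have hsub : ball (0 : EuclideanSpace ℝ (Fin n)) (1 / 2) ⊆ ball 0 1 :=
    ball_subset_ball (by norm_num)
  have cg := hg.1.continuous
  have mg := cg.memLp_ball (1 / 2)
  have hum := hud.continuousOn.aestronglyMeasurable (μ := volume) measurableSet_ball
  have hu : MemLp u 2 (volume.restrict (ball (0 : EuclideanSpace ℝ (Fin n)) 1)) := by
    refine (memLp_two_iff_integrable_sq hum).2 (Integrable.mono' huI (hum.pow 2)
      (.of_forall fun x => ?_))
    rw [Real.norm_eq_abs, abs_of_nonneg (sq_nonneg _)]
    linarith [sq_nonneg ‖gradient u x‖]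
  have mu : MemLp u 2 (volume.restrict (ball (0 : EuclideanSpace ℝ (Fin n)) (1 / 2))) :=
    hu.mono_measure (Measure.restrict_mono hsub le_rfl)
  rw [h1_norm hn hl1 hg hg1] at happ
  have hgg := half_ball_mul hn hg hg
  have hgg' := hgg
  simp only [← sq] at hgg'
  rw [hg1, mul_one] at hgg'
  have hPg := half_ball_mul hn (hP l) hg
  have hexp := exp_bound n l hl1
  have hA : (0 : ℝ) < (1 / 2) ^ (n + (l + l)) / (n + (l + l : ℕ)) := by
    have : (0 : ℝ) < (l + l : ℕ) := by exact_mod_cast (by omega : 0 < l + l)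
    positivity
  set A : ℝ := (1 / 2) ^ (n + (l + l)) / (n + (l + l : ℕ)) with hAdef
  set s := ∫ θ : sphere (0 : EuclideanSpace ℝ (Fin n)) 1, P l θ * g θ ∂(sphMeas n) with hs
  set t : ℝ := 1 / Real.sqrt (A * (1 + 4 * l * (2 * l + n))) with ht
  have e1 : ∀ x, g x / Real.sqrt (A * (1 + 4 * l * (2 * l + n))) = t * g x := fun x => by
    rw [ht]; ring
  simp only [e1] at happ
  have happ2 := (Real.sqrt_le_left (by positivity)).1 happ
  have mtg : MemLp (fun x => t * g x) 2
      (volume.restrict (ball (0 : EuclideanSpace ℝ (Fin n)) (1 / 2))) := mg.const_mul t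
  have hcs := cauchy_schwarz (mtg.sub mu) mg
  have e2 : ∫ x in ball (0 : EuclideanSpace ℝ (Fin n)) (1 / 2),
      ((fun x => t * g x) - u) x * g x = t * A - A * s := by
    have : ∀ x, ((fun x => t * g x) - u) x * g x = t * (g x * g x) - u x * g x := fun x => by
      simp only [Pi.sub_apply]; ring
    simp only [this]
    have I1 : IntegrableOn (fun x => t * (g x * g x)) (ball 0 (1 / 2)) :=
      (mg.integrable_mul mg).const_mul t
    have I2 : IntegrableOn (fun x => u x * g x) (ball 0 (1 / 2)) := mu.integrable_mul mg
    rw [integral_sub I1 I2,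
      integral_const_mul, pairing hn hg hP hu hlim, hPg]
    simp only [← sq]
    rw [hgg']
  rw [e2, hgg'] at hcs
  have hfin := coeff_bound hA hl' (Nat.cast_nonneg n) (by exact_mod_cast hl) ht
    (hcs.trans (mul_le_mul_of_nonneg_right happ2 hA.le))
  have hs2 := cauchy_schwarz (memLp_sphere (hP l).1.continuous) (memLp_sphere cg)
  rw [hg1, mul_one] at hs2
  -- the degree `l` term alone already has the claimed size
  refine le_trans (ENNReal.ofReal_le_ofReal ?_) (ENNReal.le_tsum l)
  refine (hexp.trans (hfin.trans hs2)).trans (le_mul_of_one_le_left ?_ ?_)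
  · exact integral_nonneg fun θ => sq_nonneg _
  · linarith [Real.sqrt_nonneg ((l : ℝ) * (l + n - 2))]
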